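/- Per-episode estimation bias bound (deterministic core of Lemma 4.3): there exist absolute constants c₁, c₂ > 0 such that the following holds. Assume γ ∈ (0,1) and Σ_s ρ(s) Σ_a π̄(a|s) f(s,a)² ≤ ζ. Let α ≥ c₁·√( kAζ/ξ + λd + kζ ), define the bonus b̂(s,a) = (1/(1−γ))·min( α·‖φ̂(s,a)‖_{Σ_{ρ×π̄,φ̂}^{-1}}, 2 ) with Σ_{ρ×π̄,φ̂} = k·Σ_{s,a} ρ(s)π̄(a|s)·φ̂(s,a)φ̂(s,a)ᵀ + λ·I_d, and let ℓ : S×𝒜 → [0,1]. Then for every policy π, V_{P*, ℓ}^π − V_{P̂, ℓ−b̂}^π ≤ c₂·[ (α/(1−γ)³)·√(dA/ξ) · Σ_{s,a} d_{P*}^π(s,a)·‖φ*(s,a)‖_{Σ_{ρ,φ*}^{-1}} + √( dA·α² / ( (1−γ)³·k·ξ ) ) + √( A·ζ / ( (1−γ)⁵·ξ ) ) ], where Σ_{ρ,φ*} = k·Σ_{s,a} ρ(s,a)·φ*(s,a)φ*(s,a)ᵀ + λ·I_d. -/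

import Mathlib

/-!
The proof takes `c₁ = 1`, `c₂ = 7` and works entirely under the true model `P*`.

Integrating the Bellman equation of the learned value `V̂ = V_{P̂, ℓ-b̂}^π` against the true occupancy
`d*` gives the simulation identity (`simulation`)
`(1-γ)(V_{P*,ℓ} - V_{P̂,ℓ-b̂}) = Σ d* (b̂ + γ (P* - P̂) V̂)`. Since `|ℓ - b̂| ≤ 2/(1-γ)`, one has
`|V̂| ≤ 2/(1-γ)²`, so only the `d*`-averages of two functions with values in `[0,2]` matter: the
model error `f` and the rescaled bonus `g = (1-γ) b̂`.

Such an average is bounded by `one_step_back`. The flow equation writes `d*` as its initial part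
plus one transition of `P*`. The initial part is dominated by `ρ`, as is `π` by `(A/ξ) π̄`, so Jensen
bounds it by the second moment `W` under `ρ × π̄`. In the transition part, `Σ_s P*(s|·) g_π(s)` is
`⟨v, φ*⟩` with `v = Σ_s g_π(s) μ*(s)`; Cauchy–Schwarz splits off `‖φ*‖_{Σ⁻¹}` (`dual_cauchy_schwarz`),
and `‖v‖_Σ²` is at most `(k(A/ξ)W + 4λd)/γ` because `ρ` dominates `γ` times its own push-forward.

For `f` the second moment is at most `ζ` by hypothesis, and `kAζ/ξ + λd ≤ α²`. For `g` it is at most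
`α² d / k`, as `k Σ ρ π̄ ‖φ̂‖²_{Σ̂⁻¹} = tr(Σ̂⁻¹(Σ̂ - λI)) ≤ d` (`cov_trace_le`). The two bounds combine in
`bias_arith`, where `A ≥ 1`, `ξ ≤ 1` and `d ≥ 1` absorb terms without the factor `√(dA/ξ)`.
-/

open Finset

noncomputable section

/-- Probability that the state at step `τ` equals `s`, when actions are drawn
from policy `π` and transitions from kernel `P`, starting at `s0`. -/
def stateDist {S A : Type*} [Fintype S] [Fintype A] [DecidableEq S]
    (P : S → A → S → ℝ) (π : S → A → ℝ) (s0 : S) : ℕ → S → ℝ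
  | 0 => fun s => if s = s0 then 1 else 0
  | τ + 1 => fun s' => ∑ s, ∑ a, stateDist P π s0 τ s * π s a * P s a s'

/-- Discounted value `V_{P,ℓ}^π(s0) = Σ_{τ=0}^∞ γ^τ E[ℓ(s_τ,a_τ) | π, P, s0]`. -/
def value {S A : Type*} [Fintype S] [Fintype A] [DecidableEq S] (γ : ℝ)
    (P : S → A → S → ℝ) (ℓ : S → A → ℝ) (π : S → A → ℝ) (s0 : S) : ℝ :=
  ∑' τ : ℕ, γ ^ τ * ∑ s, ∑ a, stateDist P π s0 τ s * π s a * ℓ s a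

/-- Discounted value from the initial distribution `d₀`:
`V_{P,ℓ}^π = Σ_{s₀} d₀(s₀) V_{P,ℓ}^π(s₀)`. -/
def valueInit {S A : Type*} [Fintype S] [Fintype A] [DecidableEq S] (γ : ℝ)
    (d0 : S → ℝ) (P : S → A → S → ℝ) (ℓ : S → A → ℝ) (π : S → A → ℝ) : ℝ :=
  ∑ s0, d0 s0 * value γ P ℓ π s0

/-- Step-`h` occupancy: `d_{P,0}^π(s,a) = d₀(s)π(a|s)` and
`d_{P,h+1}^π(s,a) = Σ_{s',a'} d_{P,h}^π(s',a') P(s|s',a') π(a|s)`. -/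
def occ {S A : Type*} [Fintype S] [Fintype A] (d0 : S → ℝ)
    (P : S → A → S → ℝ) (π : S → A → ℝ) : ℕ → S → A → ℝ
  | 0 => fun s a => d0 s * π s a
  | h + 1 => fun s a => (∑ s', ∑ a', occ d0 P π h s' a' * P s' a' s) * π s a

/-- Discounted occupancy `d_P^π(s,a) = (1−γ) Σ_{h=0}^∞ γ^h d_{P,h}^π(s,a)`. -/
def docc {S A : Type*} [Fintype S] [Fintype A] (γ : ℝ) (d0 : S → ℝ)
    (P : S → A → S → ℝ) (π : S → A → ℝ) (s : S) (a : A) : ℝ :=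
  (1 - γ) * ∑' h : ℕ, γ ^ h * occ d0 P π h s a

open Matrix


section Kernel

variable {S A : Type*} [Fintype S] [Fintype A]

/-! ### Values and the Bellman equation -/

lemma stateDist_nonneg [DecidableEq S] {P : S → A → S → ℝ} {π : S → A → ℝ}
    (hP : ∀ s a s', 0 ≤ P s a s') (hπ : ∀ s a, 0 ≤ π s a) (s0 : S) (n : ℕ) (s : S) :
    0 ≤ stateDist P π s0 n s := by
  induction n generalizing s with
  | zero => simp only [stateDist]; split_ifs <;> norm_num
  | succ n ih =>
    exact sum_nonneg fun s' _ => sum_nonneg fun a _ =>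
      mul_nonneg (mul_nonneg (ih s') (hπ s' a)) (hP s' a s)

lemma stateDist_sum [DecidableEq S] {P : S → A → S → ℝ} {π : S → A → ℝ}
    (hP1 : ∀ s a, ∑ s', P s a s' = 1) (hπ1 : ∀ s, ∑ a, π s a = 1) (s0 : S) (n : ℕ) :
    ∑ s, stateDist P π s0 n s = 1 := by
  induction n with
  | zero => simp [stateDist]
  | succ n ih =>
    simp only [stateDist]
    rw [sum_comm]
    rw [← ih]
    refine sum_congr rfl fun s _ => ?_
    rw [sum_comm]
    simp only [← mul_sum, hP1, mul_one, hπ1]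

/-- Decomposition along the first step, whereas `stateDist` recurses on the last one. -/
lemma stateDist_succ' [DecidableEq S] (P : S → A → S → ℝ) (π : S → A → ℝ)
    (s0 : S) (n : ℕ) (s : S) :
    stateDist P π s0 (n + 1) s =
      ∑ a, ∑ s1, π s0 a * P s0 a s1 * stateDist P π s1 n s := by
  induction n generalizing s with
  | zero => simp [stateDist, ite_mul, mul_ite]
  | succ n ih =>
    rw [stateDist]
    simp only [ih]
    simp only [stateDist, mul_sum, sum_mul]
    calc _ = ∑ x, ∑ b, ∑ a, ∑ s1,
          π s0 a * P s0 a s1 * (stateDist P π s1 n x * π x b * P x b s) := by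
          refine sum_congr rfl fun x _ => sum_congr rfl fun b _ => sum_congr rfl fun a _ =>
            sum_congr rfl fun s1 _ => by ring
      _ = ∑ x, ∑ a, ∑ b, ∑ s1,
          π s0 a * P s0 a s1 * (stateDist P π s1 n x * π x b * P x b s) :=
          sum_congr rfl fun x _ => sum_comm
      _ = ∑ a, ∑ x, ∑ b, ∑ s1,
          π s0 a * P s0 a s1 * (stateDist P π s1 n x * π x b * P x b s) := sum_comm
      _ = ∑ a, ∑ x, ∑ s1, ∑ b,
          π s0 a * P s0 a s1 * (stateDist P π s1 n x * π x b * P x b s) :=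
          sum_congr rfl fun a _ => sum_congr rfl fun x _ => sum_comm
      _ = _ := sum_congr rfl fun a _ => sum_comm

/-- The expected reward at a fixed step is bounded by the bound on the rewards. -/
lemma abs_step_le [DecidableEq S] {P : S → A → S → ℝ} {π : S → A → ℝ}
    (hP : ∀ s a s', 0 ≤ P s a s') (hP1 : ∀ s a, ∑ s', P s a s' = 1)
    (hπ : ∀ s a, 0 ≤ π s a) (hπ1 : ∀ s, ∑ a, π s a = 1)
    {r : S → A → ℝ} {B : ℝ} (hr : ∀ s a, |r s a| ≤ B) (s0 : S) (n : ℕ) :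
    |∑ s, ∑ a, stateDist P π s0 n s * π s a * r s a| ≤ B := by
  have h0 := stateDist_nonneg hP hπ s0 n
  calc |∑ s, ∑ a, stateDist P π s0 n s * π s a * r s a|
      ≤ ∑ s, ∑ a, |stateDist P π s0 n s * π s a * r s a| :=
        (abs_sum_le_sum_abs _ _).trans (sum_le_sum fun s _ => abs_sum_le_sum_abs _ _)
    _ ≤ ∑ s, ∑ a, stateDist P π s0 n s * π s a * B := by
        refine sum_le_sum fun s _ => sum_le_sum fun a _ => ?_
        have h := mul_nonneg (h0 s) (hπ s a)
        rw [abs_mul, abs_of_nonneg h]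
        exact mul_le_mul_of_nonneg_left (hr s a) h
    _ = B := by
        simp only [← sum_mul, ← mul_sum, hπ1, mul_one, stateDist_sum hP1 hπ1, one_mul]

lemma value_summable [DecidableEq S] {γ : ℝ} (hγ0 : 0 ≤ γ) (hγ1 : γ < 1)
    {P : S → A → S → ℝ} {π : S → A → ℝ}
    (hP : ∀ s a s', 0 ≤ P s a s') (hP1 : ∀ s a, ∑ s', P s a s' = 1)
    (hπ : ∀ s a, 0 ≤ π s a) (hπ1 : ∀ s, ∑ a, π s a = 1)
    {r : S → A → ℝ} {B : ℝ} (hr : ∀ s a, |r s a| ≤ B) (s0 : S) :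
    Summable fun n : ℕ => γ ^ n * ∑ s, ∑ a, stateDist P π s0 n s * π s a * r s a := by
  refine Summable.of_norm_bounded ((summable_geometric_of_lt_one hγ0 hγ1).mul_right B) fun n => ?_
  rw [Real.norm_eq_abs, abs_mul, abs_of_nonneg (pow_nonneg hγ0 n)]
  exact mul_le_mul_of_nonneg_left (abs_step_le hP hP1 hπ hπ1 hr s0 n) (pow_nonneg hγ0 n)

lemma abs_value_le [DecidableEq S] {γ : ℝ} (hγ0 : 0 ≤ γ) (hγ1 : γ < 1)
    {P : S → A → S → ℝ} {π : S → A → ℝ}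
    (hP : ∀ s a s', 0 ≤ P s a s') (hP1 : ∀ s a, ∑ s', P s a s' = 1)
    (hπ : ∀ s a, 0 ≤ π s a) (hπ1 : ∀ s, ∑ a, π s a = 1)
    {r : S → A → ℝ} {B : ℝ} (hr : ∀ s a, |r s a| ≤ B) (s0 : S) :
    |value γ P r π s0| ≤ B / (1 - γ) := by
  have hs : HasSum (fun n : ℕ => γ ^ n * B) ((1 - γ)⁻¹ * B) :=
    (hasSum_geometric_of_lt_one hγ0 hγ1).mul_right B
  have := tsum_of_norm_bounded hs
    (f := fun n : ℕ => γ ^ n * ∑ s, ∑ a, stateDist P π s0 n s * π s a * r s a) fun n => by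
      rw [Real.norm_eq_abs, abs_mul, abs_of_nonneg (pow_nonneg hγ0 n)]
      exact mul_le_mul_of_nonneg_left (abs_step_le hP hP1 hπ hπ1 hr s0 n) (pow_nonneg hγ0 n)
  rw [Real.norm_eq_abs] at this
  rw [value, div_eq_inv_mul]
  exact this

/-- The Bellman equation for the discounted value. -/
lemma value_bellman [DecidableEq S] {γ : ℝ} (hγ0 : 0 ≤ γ) (hγ1 : γ < 1)
    {P : S → A → S → ℝ} {π : S → A → ℝ}
    (hP : ∀ s a s', 0 ≤ P s a s') (hP1 : ∀ s a, ∑ s', P s a s' = 1)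
    (hπ : ∀ s a, 0 ≤ π s a) (hπ1 : ∀ s, ∑ a, π s a = 1)
    {r : S → A → ℝ} {B : ℝ} (hr : ∀ s a, |r s a| ≤ B) (s0 : S) :
    value γ P r π s0 =
      ∑ a, π s0 a * (r s0 a + γ * ∑ s', P s0 a s' * value γ P r π s') := by
  have hsum := fun s => value_summable hγ0 hγ1 hP hP1 hπ hπ1 hr s
  have hstep : ∀ n : ℕ,
      γ ^ (n + 1) * ∑ s, ∑ a, stateDist P π s0 (n + 1) s * π s a * r s a =
      ∑ b, ∑ s1, π s0 b * γ * P s0 b s1 *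
        (γ ^ n * ∑ s, ∑ a, stateDist P π s1 n s * π s a * r s a) := by
    intro n
    simp only [stateDist_succ', sum_mul, mul_sum]
    calc _ = ∑ s, ∑ b, ∑ a, ∑ s1, π s0 b * γ * P s0 b s1 *
          (γ ^ n * (stateDist P π s1 n s * π s a * r s a)) := by
          refine sum_congr rfl fun s _ => ?_
          rw [sum_comm]
          refine sum_congr rfl fun b _ => sum_congr rfl fun a _ =>
            sum_congr rfl fun s1 _ => by ring
      _ = ∑ b, ∑ s, ∑ a, ∑ s1, π s0 b * γ * P s0 b s1 *
          (γ ^ n * (stateDist P π s1 n s * π s a * r s a)) := sum_comm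
      _ = ∑ b, ∑ s, ∑ s1, ∑ a, π s0 b * γ * P s0 b s1 *
          (γ ^ n * (stateDist P π s1 n s * π s a * r s a)) :=
          sum_congr rfl fun b _ => sum_congr rfl fun s _ => sum_comm
      _ = _ := sum_congr rfl fun b _ => sum_comm
  have h1 : value γ P r π s0 = ∑ a, π s0 a * r s0 a +
      ∑ b, ∑ s1, π s0 b * γ * P s0 b s1 * value γ P r π s1 := by
    rw [value, (hsum s0).tsum_eq_zero_add]
    congr 1
    · simp [stateDist, ite_mul]
    · simp only [hstep]
      rw [Summable.tsum_finsetSum fun b _ => summable_sum fun s1 _ => (hsum s1).mul_left _]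
      refine sum_congr rfl fun b _ => ?_
      rw [Summable.tsum_finsetSum fun s1 _ => (hsum s1).mul_left _]
      refine sum_congr rfl fun s1 _ => ?_
      rw [tsum_mul_left]
      rfl
  rw [h1, ← sum_add_distrib]
  refine sum_congr rfl fun a _ => ?_
  rw [mul_add, mul_sum, mul_sum]
  congr 1
  exact sum_congr rfl fun s _ => by ring

/-! ### The discounted occupancy and its flow equation -/

lemma occ_nonneg {d0 : S → ℝ} {P : S → A → S → ℝ} {π : S → A → ℝ} (hd : ∀ s, 0 ≤ d0 s)
    (hP : ∀ s a s', 0 ≤ P s a s') (hπ : ∀ s a, 0 ≤ π s a) (n : ℕ) (s : S) (a : A) :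
    0 ≤ occ d0 P π n s a := by
  induction n generalizing s a with
  | zero => exact mul_nonneg (hd s) (hπ s a)
  | succ n ih =>
    exact mul_nonneg (sum_nonneg fun s' _ => sum_nonneg fun a' _ =>
      mul_nonneg (ih s' a') (hP s' a' s)) (hπ s a)

lemma occ_sum {d0 : S → ℝ} {P : S → A → S → ℝ} {π : S → A → ℝ} (hd1 : ∑ s, d0 s = 1)
    (hP1 : ∀ s a, ∑ s', P s a s' = 1) (hπ1 : ∀ s, ∑ a, π s a = 1) (n : ℕ) :
    ∑ s, ∑ a, occ d0 P π n s a = 1 := by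
  induction n with
  | zero => simp only [occ, ← mul_sum, hπ1, mul_one, hd1]
  | succ n ih =>
    simp only [occ, ← mul_sum, hπ1, mul_one]
    rw [sum_comm, ← ih]
    refine sum_congr rfl fun s _ => ?_
    rw [sum_comm]
    simp only [← mul_sum, hP1, mul_one]

lemma docc_summable {γ : ℝ} (hγ0 : 0 ≤ γ) (hγ1 : γ < 1)
    {d0 : S → ℝ} {P : S → A → S → ℝ} {π : S → A → ℝ} (hd : ∀ s, 0 ≤ d0 s)
    (hd1 : ∑ s, d0 s = 1)
    (hP : ∀ s a s', 0 ≤ P s a s') (hP1 : ∀ s a, ∑ s', P s a s' = 1)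
    (hπ : ∀ s a, 0 ≤ π s a) (hπ1 : ∀ s, ∑ a, π s a = 1) (s : S) (a : A) :
    Summable fun n : ℕ => γ ^ n * occ d0 P π n s a := by
  refine Summable.of_nonneg_of_le
    (fun n => mul_nonneg (pow_nonneg hγ0 n) (occ_nonneg hd hP hπ n s a)) (fun n => ?_)
    (summable_geometric_of_lt_one hγ0 hγ1)
  refine mul_le_of_le_one_right (pow_nonneg hγ0 n) ?_
  have h0 := occ_nonneg hd hP hπ n
  rw [← occ_sum hd1 hP1 hπ1 n]
  exact (single_le_sum (f := fun a => occ d0 P π n s a) (fun a _ => h0 s a) (mem_univ a)).trans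
    (single_le_sum (f := fun s => ∑ a, occ d0 P π n s a)
      (fun s _ => sum_nonneg fun a _ => h0 s a) (mem_univ s))

lemma docc_nonneg {γ : ℝ} (hγ0 : 0 ≤ γ) (hγ1 : γ < 1)
    {d0 : S → ℝ} {P : S → A → S → ℝ} {π : S → A → ℝ} (hd : ∀ s, 0 ≤ d0 s)
    (hP : ∀ s a s', 0 ≤ P s a s') (hπ : ∀ s a, 0 ≤ π s a) (s : S) (a : A) :
    0 ≤ docc γ d0 P π s a :=
  mul_nonneg (by linarith) (tsum_nonneg fun n =>
    mul_nonneg (pow_nonneg hγ0 n) (occ_nonneg hd hP hπ n s a))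

/-- Bellman flow equation for the discounted occupancy. -/
lemma docc_flow {γ : ℝ} (hγ0 : 0 ≤ γ) (hγ1 : γ < 1)
    {d0 : S → ℝ} {P : S → A → S → ℝ} {π : S → A → ℝ} (hd : ∀ s, 0 ≤ d0 s)
    (hd1 : ∑ s, d0 s = 1)
    (hP : ∀ s a s', 0 ≤ P s a s') (hP1 : ∀ s a, ∑ s', P s a s' = 1)
    (hπ : ∀ s a, 0 ≤ π s a) (hπ1 : ∀ s, ∑ a, π s a = 1) (s : S) (a : A) :
    docc γ d0 P π s a =
      ((1 - γ) * d0 s + γ * ∑ s', ∑ a', docc γ d0 P π s' a' * P s' a' s) * π s a := by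
  have hsum := docc_summable hγ0 hγ1 hd hd1 hP hP1 hπ hπ1
  have hstep : ∀ n : ℕ, γ ^ (n + 1) * occ d0 P π (n + 1) s a =
      ∑ s', ∑ a', γ * P s' a' s * π s a * (γ ^ n * occ d0 P π n s' a') := by
    intro n
    simp only [occ, sum_mul, mul_sum]
    exact sum_congr rfl fun s' _ => sum_congr rfl fun a' _ => by ring
  have h1 : ∑' n : ℕ, γ ^ n * occ d0 P π n s a = d0 s * π s a +
      ∑ s', ∑ a', γ * P s' a' s * π s a * ∑' n : ℕ, γ ^ n * occ d0 P π n s' a' := by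
    rw [(hsum s a).tsum_eq_zero_add]
    congr 1
    · simp [occ]
    · simp only [hstep]
      rw [Summable.tsum_finsetSum fun b _ => summable_sum fun s1 _ => (hsum _ _).mul_left _]
      refine sum_congr rfl fun b _ => ?_
      rw [Summable.tsum_finsetSum fun s1 _ => (hsum _ _).mul_left _]
      refine sum_congr rfl fun s1 _ => ?_
      rw [tsum_mul_left]
  rw [docc, h1]
  simp only [docc, mul_add, add_mul, mul_sum, sum_mul]
  congr 1
  · ring
  · exact sum_congr rfl fun s' _ => sum_congr rfl fun a' _ => by ring

lemma docc_flow_state {γ : ℝ} (hγ0 : 0 ≤ γ) (hγ1 : γ < 1)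
    {d0 : S → ℝ} {P : S → A → S → ℝ} {π : S → A → ℝ} (hd : ∀ s, 0 ≤ d0 s)
    (hd1 : ∑ s, d0 s = 1)
    (hP : ∀ s a s', 0 ≤ P s a s') (hP1 : ∀ s a, ∑ s', P s a s' = 1)
    (hπ : ∀ s a, 0 ≤ π s a) (hπ1 : ∀ s, ∑ a, π s a = 1) (s : S) :
    ∑ a, docc γ d0 P π s a =
      (1 - γ) * d0 s + γ * ∑ s', ∑ a', docc γ d0 P π s' a' * P s' a' s := by
  rw [sum_congr rfl fun a _ => docc_flow hγ0 hγ1 hd hd1 hP hP1 hπ hπ1 s a, ← mul_sum, hπ1,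
    mul_one]

/-- Integrating a function against the occupancy: the initial step plus one step back. -/
lemma docc_integral {γ : ℝ} (hγ0 : 0 ≤ γ) (hγ1 : γ < 1)
    {d0 : S → ℝ} {P : S → A → S → ℝ} {π : S → A → ℝ} (hd : ∀ s, 0 ≤ d0 s)
    (hd1 : ∑ s, d0 s = 1)
    (hP : ∀ s a s', 0 ≤ P s a s') (hP1 : ∀ s a, ∑ s', P s a s' = 1)
    (hπ : ∀ s a, 0 ≤ π s a) (hπ1 : ∀ s, ∑ a, π s a = 1) (g : S → A → ℝ) :
    ∑ s, ∑ a, docc γ d0 P π s a * g s a =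
      (1 - γ) * ∑ s, d0 s * ∑ a, π s a * g s a +
      γ * ∑ s', ∑ a', docc γ d0 P π s' a' * ∑ s, P s' a' s * ∑ a, π s a * g s a := by
  have h1 : ∀ s, ∑ a, docc γ d0 P π s a * g s a =
      (1 - γ) * (d0 s * ∑ a, π s a * g s a) +
      γ * ∑ s', ∑ a', docc γ d0 P π s' a' * (P s' a' s * ∑ a, π s a * g s a) := by
    intro s
    rw [sum_congr rfl fun a _ => by rw [docc_flow hγ0 hγ1 hd hd1 hP hP1 hπ hπ1 s a, mul_assoc],
      ← mul_sum, add_mul, mul_assoc, mul_assoc, sum_mul]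
    congr 2
    refine sum_congr rfl fun s' _ => ?_
    rw [sum_mul]
    exact sum_congr rfl fun a' _ => by ring
  rw [sum_congr rfl fun s _ => h1 s, sum_add_distrib, ← mul_sum, ← mul_sum, sum_comm]
  congr 2
  refine sum_congr rfl fun s' _ => ?_
  rw [sum_comm]
  exact sum_congr rfl fun a' _ => by rw [mul_sum]

/-- Simulation identity: the value of a model `Q`, expressed through the occupancy of `P`. -/
lemma simulation [DecidableEq S] {γ : ℝ} (hγ0 : 0 ≤ γ) (hγ1 : γ < 1)
    {d0 : S → ℝ} {P Q : S → A → S → ℝ} {π : S → A → ℝ} (hd : ∀ s, 0 ≤ d0 s)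
    (hd1 : ∑ s, d0 s = 1)
    (hP : ∀ s a s', 0 ≤ P s a s') (hP1 : ∀ s a, ∑ s', P s a s' = 1)
    (hQ : ∀ s a s', 0 ≤ Q s a s') (hQ1 : ∀ s a, ∑ s', Q s a s' = 1)
    (hπ : ∀ s a, 0 ≤ π s a) (hπ1 : ∀ s, ∑ a, π s a = 1)
    {r : S → A → ℝ} {B : ℝ} (hr : ∀ s a, |r s a| ≤ B) :
    (1 - γ) * valueInit γ d0 Q r π =
      ∑ s, ∑ a, docc γ d0 P π s a *
        (r s a + γ * ∑ s', (Q s a s' - P s a s') * value γ Q r π s') := by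
  have hb := value_bellman hγ0 hγ1 hQ hQ1 hπ hπ1 hr
  -- Integrate the right-hand side of the Bellman equation for `Q` against the occupancy of `P`.
  have h := docc_integral hγ0 hγ1 hd hd1 hP hP1 hπ hπ1
    (fun s a => r s a + γ * ∑ s', Q s a s' * value γ Q r π s')
  simp only [← hb] at h
  have h2 : ∑ s, ∑ a, docc γ d0 P π s a *
        (r s a + γ * ∑ s', (Q s a s' - P s a s') * value γ Q r π s') =
      ∑ s, ∑ a, docc γ d0 P π s a * (r s a + γ * ∑ s', Q s a s' * value γ Q r π s') -
      γ * ∑ s, ∑ a, docc γ d0 P π s a * ∑ s', P s a s' * value γ Q r π s' := by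
    rw [mul_sum, ← sum_sub_distrib]
    refine sum_congr rfl fun s _ => ?_
    rw [mul_sum, ← sum_sub_distrib]
    refine sum_congr rfl fun a _ => ?_
    simp only [sub_mul, sum_sub_distrib]
    ring
  rw [h2, h, valueInit]
  ring

end Kernel

/-! ### Regularised covariance matrices -/

section Cov

variable {S A : Type*} [Fintype S] [Fintype A] {d : ℕ}

/-- The regularised covariance `k · ∑ w(s,a) φ(s,a) φ(s,a)ᵀ + λ I`. -/
def cov (k : ℝ) (w : S → A → ℝ) (φ : S → A → Fin d → ℝ) (lam : ℝ) : Matrix (Fin d) (Fin d) ℝ :=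
  k • (∑ s, ∑ a, w s a • Matrix.vecMulVec (φ s a) (φ s a)) + lam • (1 : Matrix (Fin d) (Fin d) ℝ)

lemma cov_quad (k : ℝ) (w : S → A → ℝ) (φ : S → A → Fin d → ℝ) (lam : ℝ) (v : Fin d → ℝ) :
    v ⬝ᵥ (cov k w φ lam *ᵥ v) = k * ∑ s, ∑ a, w s a * (v ⬝ᵥ φ s a) ^ 2 + lam * (v ⬝ᵥ v) := by
  simp only [cov, add_mulVec, smul_mulVec, sum_mulVec, dotProduct_add, dotProduct_smul,
    dotProduct_sum, one_mulVec, smul_eq_mul, vecMulVec_mulVec]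
  congr 2
  refine sum_congr rfl fun s _ => sum_congr rfl fun a _ => ?_
  simp [dotProduct_comm (φ s a) v]
  left
  ring

lemma cov_posDef {k : ℝ} (hk : 0 ≤ k) {w : S → A → ℝ} (hw : ∀ s a, 0 ≤ w s a)
    (φ : S → A → Fin d → ℝ) {lam : ℝ} (hl : 0 < lam) : (cov k w φ lam).PosDef := by
  refine Matrix.PosDef.of_dotProduct_mulVec_pos ?_ fun {v} hv => ?_
  · ext i j
    simp [cov, Matrix.sum_apply, vecMulVec_apply, Matrix.one_apply, eq_comm, mul_comm]
  · rw [star_trivial, cov_quad]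
    have h1 : 0 < v ⬝ᵥ v := by
      have := dotProduct_star_self_pos_iff.2 hv
      simpa using this
    have : 0 ≤ ∑ s, ∑ a, w s a * (v ⬝ᵥ φ s a) ^ 2 :=
      sum_nonneg fun s _ => sum_nonneg fun a _ => mul_nonneg (hw s a) (sq_nonneg _)
    positivity

/-- Cauchy–Schwarz for the dual norms of `M⁻¹` and `M`. -/
lemma dual_cauchy_schwarz {M : Matrix (Fin d) (Fin d) ℝ} (hM : M.PosDef) (x v : Fin d → ℝ) :
    v ⬝ᵥ x ≤ Real.sqrt (v ⬝ᵥ (M *ᵥ v)) * Real.sqrt (x ⬝ᵥ (M⁻¹ *ᵥ x)) := by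
  have hdet : IsUnit M.det := (Matrix.isUnit_iff_isUnit_det M).1 hM.isUnit
  have hMy : M *ᵥ (M⁻¹ *ᵥ x) = x := by rw [mulVec_mulVec, Matrix.mul_nonsing_inv _ hdet, one_mulVec]
  set y := M⁻¹ *ᵥ x with hy
  have hsymm : y ⬝ᵥ (M *ᵥ v) = v ⬝ᵥ x := by
    have hT : Mᵀ = M := by simpa [IsHermitian] using hM.isHermitian
    rw [dotProduct_mulVec, ← mulVec_transpose, hT, hMy, dotProduct_comm]
  have hq : ∀ t : ℝ, 0 ≤ (x ⬝ᵥ y) * (t * t) + (-2 * (v ⬝ᵥ x)) * t + v ⬝ᵥ (M *ᵥ v) := by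
    intro t
    have h := hM.posSemidef.dotProduct_mulVec_nonneg (v - t • y)
    rw [star_trivial, mulVec_sub, mulVec_smul, hMy, sub_dotProduct, dotProduct_sub, dotProduct_sub,
      smul_dotProduct, smul_dotProduct, dotProduct_smul, dotProduct_smul, hsymm,
      dotProduct_comm y x] at h
    simp only [smul_eq_mul] at h
    linarith
  have hdisc := discrim_le_zero hq
  have hc : 0 ≤ v ⬝ᵥ (M *ᵥ v) := by simpa using hM.posSemidef.dotProduct_mulVec_nonneg v
  rw [← Real.sqrt_mul hc]
  refine Real.le_sqrt_of_sq_le ?_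
  rw [discrim] at hdisc
  linarith

/-- Elliptical potential (trace) bound: the weighted squared `Σ⁻¹`-norms of the features
sum to `tr(Σ⁻¹(Σ - λI)) ≤ d`. -/
lemma cov_trace_le {k : ℝ} (hk : 0 ≤ k) {w : S → A → ℝ} (hw : ∀ s a, 0 ≤ w s a)
    (φ : S → A → Fin d → ℝ) {lam : ℝ} (hl : 0 < lam) :
    k * ∑ s, ∑ a, w s a * (φ s a ⬝ᵥ ((cov k w φ lam)⁻¹ *ᵥ φ s a)) ≤ d := by
  have hM := cov_posDef hk hw φ hl
  have hdet : IsUnit (cov k w φ lam).det := (Matrix.isUnit_iff_isUnit_det _).1 hM.isUnit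
  set N := (cov k w φ lam)⁻¹ with hN
  have h1 : (N * cov k w φ lam).trace = d := by
    rw [hN, Matrix.nonsing_inv_mul _ hdet]; simp
  have h2 : (N * cov k w φ lam).trace =
      k * ∑ s, ∑ a, w s a * (φ s a ⬝ᵥ (N *ᵥ φ s a)) + lam * N.trace := by
    rw [cov, mul_add, trace_add, mul_smul_comm, mul_smul_comm, trace_smul, trace_smul, mul_one,
      Matrix.mul_sum, trace_sum]
    simp only [Matrix.mul_sum, trace_sum, mul_smul_comm, trace_smul, smul_eq_mul,
      mul_vecMulVec, trace_vecMulVec]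
    simp only [dotProduct_comm]
  have h3 : 0 ≤ N.trace := hM.inv.posSemidef.trace_nonneg
  nlinarith [mul_nonneg hl.le h3]

end Cov

/-! ### One step back along the true model -/

section Back

lemma sq_sum_mul_le {ι : Type*} [Fintype ι] {p : ι → ℝ} (hp : ∀ i, 0 ≤ p i)
    (hp1 : ∑ i, p i = 1) (x : ι → ℝ) : (∑ i, p i * x i) ^ 2 ≤ ∑ i, p i * x i ^ 2 := by
  have := Finset.sum_sq_le_sum_mul_sum_of_sq_le_mul univ (r := fun i => p i * x i)
    (f := p) (g := fun i => p i * x i ^ 2) (fun i _ => hp i)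
    (fun i _ => mul_nonneg (hp i) (sq_nonneg _)) (fun i _ => le_of_eq (by ring))
  rwa [hp1, one_mul] at this

variable {S A : Type*} [Fintype S] [Fintype A] {d : ℕ}

/-- The average of `0 ≤ g ≤ 2` under the occupancy of `π` is controlled by its second moment `W`
under the data distribution `ρ × πbar`, where `ρ` dominates `1 - γ` times the initial distribution
and `γ` times its own one-step push-forward, and `π ≤ C * πbar` (with `C = A/ξ` in the application).
The transition factors through the `d`-dimensional features, so the part of the occupancy after
the first step costs only the elliptical norm of the features of the previous step. -/
lemma one_step_back {γ : ℝ} (hγ0 : 0 < γ) (hγ1 : γ < 1)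
    {d0 : S → ℝ} {P : S → A → S → ℝ} {π : S → A → ℝ} (hd : ∀ s, 0 ≤ d0 s)
    (hd1 : ∑ s, d0 s = 1)
    (hP : ∀ s a s', 0 ≤ P s a s') (hP1 : ∀ s a, ∑ s', P s a s' = 1)
    (hπ : ∀ s a, 0 ≤ π s a) (hπ1 : ∀ s, ∑ a, π s a = 1)
    {φ : S → A → Fin d → ℝ} {μ : S → Fin d → ℝ} (hφμ : ∀ s a s', P s a s' = μ s' ⬝ᵥ φ s a)
    (hμ : ∀ g : S → ℝ, (∀ s, g s ∈ Set.Icc (0 : ℝ) 1) →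
      Real.sqrt ((∑ s, g s • μ s) ⬝ᵥ (∑ s, g s • μ s)) ≤ Real.sqrt d)
    {ρ πbar : S → A → ℝ} (hρ : ∀ s a, 0 ≤ ρ s a)
    (hρ0 : ∀ s, (1 - γ) * d0 s ≤ ∑ a, ρ s a)
    (hρP : ∀ s, γ * ∑ s', ∑ a', ρ s' a' * P s' a' s ≤ ∑ a, ρ s a)
    {C : ℝ} (hC : 0 ≤ C) (hππ : ∀ s a, π s a ≤ C * πbar s a)
    {k lam : ℝ} (hk : 0 ≤ k) (hl : 0 < lam)
    {g : S → A → ℝ} (hg0 : ∀ s a, 0 ≤ g s a) (hg2 : ∀ s a, g s a ≤ 2)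
    {W : ℝ} (hW : ∑ s, (∑ a, ρ s a) * ∑ a, πbar s a * g s a ^ 2 ≤ W) :
    ∑ s, ∑ a, docc γ d0 P π s a * g s a ≤ Real.sqrt ((1 - γ) * (C * W)) +
      Real.sqrt (k * (C * W) + 4 * lam * d) *
        ∑ s, ∑ a, docc γ d0 P π s a * Real.sqrt (φ s a ⬝ᵥ ((cov k ρ φ lam)⁻¹ *ᵥ φ s a)) := by
  have h1γ : 0 ≤ 1 - γ := by linarith
  set G : S → ℝ := fun s => ∑ a, π s a * g s a with hG
  have hG0 : ∀ s, 0 ≤ G s := fun s => sum_nonneg fun a _ => mul_nonneg (hπ s a) (hg0 s a)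
  have hG2 : ∀ s, G s ≤ 2 := fun s => by
    calc G s ≤ ∑ a, π s a * 2 :=
          sum_le_sum fun a _ => mul_le_mul_of_nonneg_left (hg2 s a) (hπ s a)
      _ = 2 := by rw [← sum_mul, hπ1, one_mul]
  have hGsq : ∀ s, G s ^ 2 ≤ C * ∑ a, πbar s a * g s a ^ 2 := fun s => by
    refine (sq_sum_mul_le (hπ s) (hπ1 s) _).trans ?_
    rw [mul_sum]
    refine sum_le_sum fun a _ => ?_
    rw [← mul_assoc]
    exact mul_le_mul_of_nonneg_right (hππ s a) (sq_nonneg _)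
  have hρs : ∀ s, 0 ≤ ∑ a, ρ s a := fun s => sum_nonneg fun a _ => hρ s a
  -- Second moment of `G` under the state marginal of `ρ`.
  have hρG : ∑ s, (∑ a, ρ s a) * G s ^ 2 ≤ C * W := by
    refine le_trans ?_ (mul_le_mul_of_nonneg_left hW hC)
    rw [mul_sum]
    refine sum_le_sum fun s _ => ?_
    refine (mul_le_mul_of_nonneg_left (hGsq s) (hρs s)).trans_eq ?_
    ring
  rw [docc_integral hγ0.le hγ1 hd hd1 hP hP1 hπ hπ1 g]
  refine add_le_add ?_ ?_
  · refine Real.le_sqrt_of_sq_le ?_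
    have h := sq_sum_mul_le hd hd1 G
    have h2 : (1 - γ) * ∑ s, d0 s * G s ^ 2 ≤ C * W := by
      refine le_trans ?_ hρG
      rw [mul_sum]
      refine sum_le_sum fun s _ => ?_
      rw [← mul_assoc]
      exact mul_le_mul_of_nonneg_right (hρ0 s) (sq_nonneg _)
    calc ((1 - γ) * ∑ s, d0 s * G s) ^ 2 = (1 - γ) * ((1 - γ) * (∑ s, d0 s * G s) ^ 2) := by ring
      _ ≤ (1 - γ) * ((1 - γ) * ∑ s, d0 s * G s ^ 2) := by gcongr
      _ ≤ (1 - γ) * (C * W) := by gcongr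
  · have hM := cov_posDef hk hρ φ hl
    set v : Fin d → ℝ := ∑ s, G s • μ s with hv
    have hPv : ∀ s a, ∑ s', P s a s' * G s' = v ⬝ᵥ φ s a := fun s a => by
      rw [hv, sum_dotProduct]
      refine sum_congr rfl fun s' _ => ?_
      rw [hφμ, smul_dotProduct, smul_eq_mul, mul_comm]
    have hvv : v ⬝ᵥ v ≤ 4 * d := by
      have h := hμ (fun s => G s / 2) fun s => ⟨by linarith [hG0 s], by linarith [hG2 s]⟩
      have hv2 : ∑ s, (G s / 2) • μ s = (1 / 2 : ℝ) • v := by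
        rw [hv, smul_sum]
        exact sum_congr rfl fun s _ => by rw [smul_smul]; congr 1; ring
      rw [hv2, Real.sqrt_le_sqrt_iff (Nat.cast_nonneg d), smul_dotProduct, dotProduct_smul,
        smul_eq_mul, smul_eq_mul] at h
      linarith
    have hquad : v ⬝ᵥ (cov k ρ φ lam *ᵥ v) * γ ≤ k * (C * W) + 4 * lam * d := by
      have h1 : γ * ∑ s, ∑ a, ρ s a * (v ⬝ᵥ φ s a) ^ 2 ≤ C * W := by
        refine le_trans ?_ hρG
        calc γ * ∑ s, ∑ a, ρ s a * (v ⬝ᵥ φ s a) ^ 2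
            ≤ γ * ∑ s, ∑ a, ρ s a * ∑ s', P s a s' * G s' ^ 2 := by
              refine mul_le_mul_of_nonneg_left (sum_le_sum fun s _ => sum_le_sum fun a _ =>
                mul_le_mul_of_nonneg_left ?_ (hρ s a)) hγ0.le
              rw [← hPv]
              exact sq_sum_mul_le (hP s a) (hP1 s a) G
          _ = ∑ s', (γ * ∑ s, ∑ a, ρ s a * P s a s') * G s' ^ 2 := by
              simp only [mul_sum, sum_mul]
              rw [sum_congr rfl fun s _ => sum_comm, sum_comm]
              exact sum_congr rfl fun s' _ => sum_congr rfl fun s _ =>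
                sum_congr rfl fun a _ => by ring
          _ ≤ _ := sum_le_sum fun s' _ => mul_le_mul_of_nonneg_right (hρP s') (sq_nonneg _)
      have h2 : 0 ≤ v ⬝ᵥ v := by simpa using dotProduct_star_self_nonneg v
      rw [cov_quad]
      have h3 := mul_le_mul_of_nonneg_left h1 hk
      have h4 : γ * (lam * (v ⬝ᵥ v)) ≤ 1 * (lam * (4 * d)) :=
        mul_le_mul hγ1.le (mul_le_mul_of_nonneg_left hvv hl.le) (mul_nonneg hl.le h2) zero_le_one
      linarith
    have hq0 : 0 ≤ v ⬝ᵥ (cov k ρ φ lam *ᵥ v) := by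
      simpa using hM.posSemidef.dotProduct_mulVec_nonneg v
    have hγq : γ * Real.sqrt (v ⬝ᵥ (cov k ρ φ lam *ᵥ v)) ≤
        Real.sqrt (k * (C * W) + 4 * lam * d) := by
      refine Real.le_sqrt_of_sq_le ?_
      rw [mul_pow, Real.sq_sqrt hq0]
      nlinarith [mul_nonneg hγ0.le hq0]
    rw [mul_sum, mul_sum]
    refine sum_le_sum fun s _ => ?_
    rw [mul_sum, mul_sum]
    refine sum_le_sum fun a _ => ?_
    have hD := docc_nonneg hγ0.le hγ1 hd hP hπ s a
    have hcs := dual_cauchy_schwarz hM (φ s a) v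
    rw [← hPv] at hcs
    calc γ * (docc γ d0 P π s a * ∑ s', P s a s' * G s')
        ≤ γ * (docc γ d0 P π s a * (Real.sqrt (v ⬝ᵥ (cov k ρ φ lam *ᵥ v)) *
            Real.sqrt (φ s a ⬝ᵥ ((cov k ρ φ lam)⁻¹ *ᵥ φ s a)))) := by gcongr
      _ = γ * Real.sqrt (v ⬝ᵥ (cov k ρ φ lam *ᵥ v)) * (docc γ d0 P π s a *
            Real.sqrt (φ s a ⬝ᵥ ((cov k ρ φ lam)⁻¹ *ᵥ φ s a))) := by ring
      _ ≤ _ := mul_le_mul_of_nonneg_right hγq (mul_nonneg hD (Real.sqrt_nonneg _))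

end Back

/-! ### Assembling the bias bound -/

/-- The flow equation is affine in the occupancy, so it passes to the mixture of the data
policies. -/
lemma mixture_flow {S A : Type*} [Fintype S] [Fintype A] {γ : ℝ} (hγ0 : 0 ≤ γ) (hγ1 : γ < 1)
    {d0 : S → ℝ} {P : S → A → S → ℝ} (hd : ∀ s, 0 ≤ d0 s)
    (hd1 : ∑ s, d0 s = 1)
    (hP : ∀ s a s', 0 ≤ P s a s') (hP1 : ∀ s a, ∑ s', P s a s' = 1)
    {k : ℕ} (hk : 1 ≤ k) {πt : Fin k → S → A → ℝ}
    (hπ : ∀ i s a, 0 ≤ πt i s a) (hπ1 : ∀ i s, ∑ a, πt i s a = 1) (s : S) :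
    ∑ a, (1 / (k : ℝ)) * ∑ i, docc γ d0 P (πt i) s a = (1 - γ) * d0 s +
      γ * ∑ s', ∑ a', ((1 / (k : ℝ)) * ∑ i, docc γ d0 P (πt i) s' a') * P s' a' s := by
  have hk0 : (k : ℝ) ≠ 0 := by positivity
  have h2 : ∑ s', ∑ a', ((1 / (k : ℝ)) * ∑ i, docc γ d0 P (πt i) s' a') * P s' a' s =
      (1 / (k : ℝ)) * ∑ i, ∑ s', ∑ a', docc γ d0 P (πt i) s' a' * P s' a' s := by
    rw [sum_comm (s := (univ : Finset (Fin k))), mul_sum]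
    refine sum_congr rfl fun s' _ => ?_
    rw [sum_comm (s := (univ : Finset (Fin k))), mul_sum]
    exact sum_congr rfl fun a' _ => by rw [mul_assoc, sum_mul]
  rw [← mul_sum, sum_comm, h2,
    sum_congr rfl fun i _ => docc_flow_state hγ0 hγ1 hd hd1 hP hP1 (hπ i) (hπ1 i) s,
    sum_add_distrib, ← mul_sum (s := (univ : Finset (Fin k))), sum_const, card_univ, Fintype.card_fin, nsmul_eq_mul]
  field_simp
  simp only [mul_sum]

/-- The final arithmetic, with `D = 1 - γ`, `G` and `F` the averages of the bonus and of the model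
error, and `X` the average elliptical norm of the true features. -/
lemma bias_arith {D k a d ξ lam ζ α X G F v : ℝ} (hD : 0 < D) (hD1 : D ≤ 1) (hk : 0 < k)
    (ha : 1 ≤ a) (hd : 1 ≤ d) (hξ : 0 < ξ) (hξ1 : ξ ≤ 1) (hl : 0 < lam) (hζ : 0 ≤ ζ)
    (hα : Real.sqrt (k * a * ζ / ξ + lam * d + k * ζ) ≤ α) (hX : 0 ≤ X)
    (hG : G ≤ Real.sqrt (D * (a / ξ * (α ^ 2 * d / k))) +
      Real.sqrt (k * (a / ξ * (α ^ 2 * d / k)) + 4 * lam * d) * X)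
    (hF : F ≤ Real.sqrt (D * (a / ξ * ζ)) + Real.sqrt (k * (a / ξ * ζ) + 4 * lam * d) * X)
    (hv : D * v ≤ 1 / D * G + 2 / D ^ 2 * F) :
    v ≤ 7 * (α / D ^ 3 * Real.sqrt (d * a / ξ) * X +
      Real.sqrt (d * a * α ^ 2 / (D ^ 3 * k * ξ)) + Real.sqrt (a * ζ / (D ^ 5 * ξ))) := by
  have hα0 : 0 ≤ α := (Real.sqrt_nonneg _).trans hα
  have hα2 : k * (a / ξ * ζ) + lam * d + k * ζ ≤ α ^ 2 := by
    have h := (Real.sqrt_le_left hα0).1 hα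
    calc _ = k * a * ζ / ξ + lam * d + k * ζ := by ring
      _ ≤ _ := h
  have hkζ : 0 ≤ k * ζ := by positivity
  have hkC : 0 ≤ k * (a / ξ * ζ) := by positivity
  have hld : 0 ≤ lam * d := by positivity
  set Y := d * a / ξ with hY
  have hY1 : 1 ≤ Y := by
    rw [hY, le_div_iff₀ hξ]
    nlinarith
  have hY0 : 0 ≤ Y := by linarith
  have hα2Y : α ^ 2 ≤ α ^ 2 * Y := le_mul_of_one_le_right (sq_nonneg _) hY1
  have hs1 : Real.sqrt (k * (a / ξ * (α ^ 2 * d / k)) + 4 * lam * d) ≤ 3 * (α * Real.sqrt Y) := by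
    refine Real.sqrt_le_iff.2 ⟨by positivity, ?_⟩
    have : k * (a / ξ * (α ^ 2 * d / k)) = α ^ 2 * Y := by rw [hY]; field_simp
    rw [mul_pow, mul_pow, Real.sq_sqrt hY0, this]
    nlinarith
  have hs2 : Real.sqrt (k * (a / ξ * ζ) + 4 * lam * d) ≤ 2 * (α * Real.sqrt Y) := by
    refine Real.sqrt_le_iff.2 ⟨by positivity, ?_⟩
    rw [mul_pow, mul_pow, Real.sq_sqrt hY0]
    nlinarith
  have hR1 : Real.sqrt (D * (a / ξ * (α ^ 2 * d / k))) =
      D ^ 2 * Real.sqrt (d * a * α ^ 2 / (D ^ 3 * k * ξ)) := by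
    rw [← Real.sqrt_sq (sq_nonneg D), ← Real.sqrt_mul (sq_nonneg _)]
    congr 1
    field_simp
  have hR2 : Real.sqrt (D * (a / ξ * ζ)) = D ^ 3 * Real.sqrt (a * ζ / (D ^ 5 * ξ)) := by
    have h3 : 0 ≤ D ^ 3 := by positivity
    rw [← Real.sqrt_sq h3, ← Real.sqrt_mul (sq_nonneg _)]
    congr 1
    field_simp
  rw [hR1] at hG
  rw [hR2] at hF
  set R1 := Real.sqrt (d * a * α ^ 2 / (D ^ 3 * k * ξ))
  set R2 := Real.sqrt (a * ζ / (D ^ 5 * ξ))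
  have hR1' : 0 ≤ R1 := Real.sqrt_nonneg _
  have hR2' : 0 ≤ R2 := Real.sqrt_nonneg _
  set T := α * Real.sqrt Y * X with hT
  have hT0 : 0 ≤ T := by positivity
  have hG' : G ≤ D ^ 2 * R1 + 3 * T := by
    have := mul_le_mul_of_nonneg_right hs1 hX
    linarith
  have hF' : F ≤ D ^ 3 * R2 + 2 * T := by
    have := mul_le_mul_of_nonneg_right hs2 hX
    linarith
  have hv1 : D * v ≤ 1 / D * (D ^ 2 * R1 + 3 * T) + 2 / D ^ 2 * (D ^ 3 * R2 + 2 * T) := by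
    refine hv.trans ?_
    gcongr
  have hv2 : v ≤ R1 + 2 * R2 + 3 * (T / D ^ 2) + 4 * (T / D ^ 3) := by
    rw [← mul_le_mul_iff_right₀ hD]
    refine hv1.trans_eq ?_
    field_simp
    ring
  have hT2 : T / D ^ 2 ≤ T / D ^ 3 :=
    div_le_div_of_nonneg_left hT0 (by positivity) (pow_le_pow_of_le_one hD.le hD1 (by norm_num))
  have hTe : α / D ^ 3 * Real.sqrt Y * X = T / D ^ 3 := by rw [hT]; ring
  rw [hTe]
  linarith

/-- Per-episode estimation bias bound (deterministic core of the paper's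
Lemma 4.3): there are absolute constants `c₁, c₂ > 0` such that, in any
low-rank MDP with true model `P* = ⟨μ*,φ*⟩` and learned model `P̂ = ⟨μ̂,φ̂⟩`,
if the MLE error `f(s,a) = Σ_{s'}|P̂(s'|s,a) − P*(s'|s,a)|` satisfies
`Σ_s ρ(s) Σ_a π̄(a|s) f(s,a)² ≤ ζ` and `α ≥ c₁·√(kAζ/ξ + λd + kζ)`, then with
bonus `b̂(s,a) = (1/(1−γ))·min(α·‖φ̂(s,a)‖_{Σ_{ρ×π̄,φ̂}⁻¹}, 2)` and any loss
`ℓ : S×𝒜 → [0,1]`, every policy `π` satisfies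
`V_{P*,ℓ}^π − V_{P̂,ℓ−b̂}^π ≤ c₂·[(α/(1−γ)³)·√(dA/ξ)·
    Σ_{s,a} d_{P*}^π(s,a)·‖φ*(s,a)‖_{Σ_{ρ,φ*}⁻¹}
  + √(dAα²/((1−γ)³kξ)) + √(Aζ/((1−γ)⁵ξ))]`. -/
theorem stmt_16 :
    ∃ c₁ c₂ : ℝ, 0 < c₁ ∧ 0 < c₂ ∧
      ∀ (S A : Type) [Fintype S] [Fintype A] [DecidableEq S] (d : ℕ) (γ : ℝ),
        γ ∈ Set.Ioo (0 : ℝ) 1 →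
      ∀ d0 : S → ℝ, (∀ s, 0 ≤ d0 s) → (∑ s, d0 s = 1) →
      ∀ (φstar : S → A → Fin d → ℝ) (μstar : S → Fin d → ℝ)
        (Pstar : S → A → S → ℝ),
        (∀ s a s', Pstar s a s' = μstar s' ⬝ᵥ φstar s a) →
        (∀ s a s', 0 ≤ Pstar s a s') → (∀ s a, ∑ s', Pstar s a s' = 1) →
        (∀ s a, Real.sqrt (φstar s a ⬝ᵥ φstar s a) ≤ 1) →
        (∀ g : S → ℝ, (∀ s, g s ∈ Set.Icc (0 : ℝ) 1) →
          Real.sqrt ((∑ s, g s • μstar s) ⬝ᵥ (∑ s, g s • μstar s)) ≤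
            Real.sqrt d) →
      ∀ (φhat : S → A → Fin d → ℝ) (μhat : S → Fin d → ℝ)
        (Phat : S → A → S → ℝ),
        (∀ s a s', Phat s a s' = μhat s' ⬝ᵥ φhat s a) →
        (∀ s a s', 0 ≤ Phat s a s') → (∀ s a, ∑ s', Phat s a s' = 1) →
        (∀ s a, Real.sqrt (φhat s a ⬝ᵥ φhat s a) ≤ 1) →
        (∀ g : S → ℝ, (∀ s, g s ∈ Set.Icc (0 : ℝ) 1) →
          Real.sqrt ((∑ s, g s • μhat s) ⬝ᵥ (∑ s, g s • μhat s)) ≤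
            Real.sqrt d) →
      ∀ (k : ℕ), 1 ≤ k →
      ∀ πt : Fin k → S → A → ℝ,
        (∀ i s a, 0 ≤ πt i s a) → (∀ i s, ∑ a, πt i s a = 1) →
      ∀ ξ lam ζ α : ℝ, ξ ∈ Set.Ioc (0 : ℝ) 1 → 0 < lam →
      letI f : S → A → ℝ := fun s a => ∑ s', |Phat s a s' - Pstar s a s'|
      letI ρ : S → A → ℝ :=
        fun s a => (1 / (k : ℝ)) * ∑ i, docc γ d0 Pstar (πt i) s a
      letI ρs : S → ℝ := fun s => ∑ a, ρ s a
      letI πbar : S → A → ℝ := fun s a =>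
        ξ / (Fintype.card A : ℝ) + (1 - ξ) * ((1 / (k : ℝ)) * ∑ i, πt i s a)
      letI Sighat : Matrix (Fin d) (Fin d) ℝ :=
        (k : ℝ) • (∑ s, ∑ a, (ρs s * πbar s a) •
            Matrix.vecMulVec (φhat s a) (φhat s a)) +
          lam • (1 : Matrix (Fin d) (Fin d) ℝ)
      letI Sigstar : Matrix (Fin d) (Fin d) ℝ :=
        (k : ℝ) • (∑ s, ∑ a, ρ s a •
            Matrix.vecMulVec (φstar s a) (φstar s a)) +
          lam • (1 : Matrix (Fin d) (Fin d) ℝ)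
      letI bhat : S → A → ℝ := fun s a =>
        (1 / (1 - γ)) *
          min (α * Real.sqrt (φhat s a ⬝ᵥ (Sighat⁻¹ *ᵥ φhat s a))) 2
      (∑ s, ρs s * ∑ a, πbar s a * (f s a) ^ 2 ≤ ζ) →
      (c₁ * Real.sqrt ((k : ℝ) * (Fintype.card A : ℝ) * ζ / ξ +
          lam * d + (k : ℝ) * ζ) ≤ α) →
      ∀ ℓ : S → A → ℝ, (∀ s a, ℓ s a ∈ Set.Icc (0 : ℝ) 1) →
      ∀ π : S → A → ℝ, (∀ s a, 0 ≤ π s a) → (∀ s, ∑ a, π s a = 1) →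
        valueInit γ d0 Pstar ℓ π -
            valueInit γ d0 Phat (fun s a => ℓ s a - bhat s a) π ≤
          c₂ * ((α / (1 - γ) ^ 3) *
              Real.sqrt (d * (Fintype.card A : ℝ) / ξ) *
              ∑ s, ∑ a, docc γ d0 Pstar π s a *
                Real.sqrt (φstar s a ⬝ᵥ (Sigstar⁻¹ *ᵥ φstar s a)) +
            Real.sqrt (d * (Fintype.card A : ℝ) * α ^ 2 /
              ((1 - γ) ^ 3 * (k : ℝ) * ξ)) +
            Real.sqrt ((Fintype.card A : ℝ) * ζ / ((1 - γ) ^ 5 * ξ))) := by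
  refine ⟨1, 7, one_pos, by norm_num, ?_⟩
  intro S A _ _ _ d γ hγ d0 hd hd1 φstar μstar Pstar hPφ hP hP1 _ hμ φhat μhat Phat _ hQ hQ1 _ _
    k hk πt hπt hπt1 ξ lam ζ α hξ hl hζ hα ℓ hℓ π hπ hπ1
  -- The abbreviations of the statement, restored as local definitions.
  let f : S → A → ℝ := fun s a => ∑ s', |Phat s a s' - Pstar s a s'|
  let ρ : S → A → ℝ := fun s a => (1 / (k : ℝ)) * ∑ i, docc γ d0 Pstar (πt i) s a
  let ρs : S → ℝ := fun s => ∑ a, ρ s a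
  let πbar : S → A → ℝ := fun s a =>
    ξ / (Fintype.card A : ℝ) + (1 - ξ) * ((1 / (k : ℝ)) * ∑ i, πt i s a)
  let Sighat : Matrix (Fin d) (Fin d) ℝ := cov k (fun s a => ρs s * πbar s a) φhat lam
  let Sigstar : Matrix (Fin d) (Fin d) ℝ := cov k ρ φstar lam
  let g : S → A → ℝ := fun s a =>
    min (α * Real.sqrt (φhat s a ⬝ᵥ (Sighat⁻¹ *ᵥ φhat s a))) 2
  let bhat : S → A → ℝ := fun s a => (1 / (1 - γ)) * g s a
  replace hζ : ∑ s, ρs s * ∑ a, πbar s a * (f s a) ^ 2 ≤ ζ := hζ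
  obtain ⟨hγ0, hγ1⟩ := hγ
  obtain ⟨hξ0, hξ1⟩ := hξ
  have hD : 0 < 1 - γ := by linarith
  have hk0 : (0 : ℝ) < k := by exact_mod_cast hk
  -- The state space, the action space and the feature space are all nontrivial.
  obtain ⟨s₀⟩ : Nonempty S := by
    by_contra h
    rw [not_nonempty_iff] at h
    simp at hd1
  have hAne : Nonempty A := by
    by_contra h
    rw [not_nonempty_iff] at h
    have := hπ1 s₀
    simp at this
  obtain ⟨a₀⟩ := hAne
  have ha1 : (1 : ℝ) ≤ Fintype.card A := by exact_mod_cast Fintype.card_pos_iff.2 ⟨a₀⟩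
  have ha0 : (0 : ℝ) < Fintype.card A := by linarith
  have hd1' : (1 : ℝ) ≤ d := by
    rcases Nat.eq_zero_or_pos d with h | h
    · subst h
      have := hP1 s₀ a₀
      simp [hPφ] at this
    · exact_mod_cast h
  -- The data distribution.
  have hπm0 : ∀ s a, 0 ≤ (1 / (k : ℝ)) * ∑ i, πt i s a := fun s a =>
    mul_nonneg (by positivity) (sum_nonneg fun i _ => hπt i s a)
  have hπbar : ∀ s a, ξ / (Fintype.card A : ℝ) ≤ πbar s a := fun s a =>
    le_add_of_nonneg_right (mul_nonneg (by linarith) (hπm0 s a))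
  have hπbar0 : ∀ s a, 0 ≤ πbar s a := fun s a => le_trans (by positivity) (hπbar s a)
  have hππ : ∀ s a, π s a ≤ (Fintype.card A : ℝ) / ξ * πbar s a := fun s a => by
    have h1 : π s a ≤ 1 := by
      rw [← hπ1 s]; exact single_le_sum (f := π s) (fun a _ => hπ s a) (mem_univ a)
    refine h1.trans ?_
    calc (1 : ℝ) = (Fintype.card A : ℝ) / ξ * (ξ / (Fintype.card A : ℝ)) := by
          field_simp
      _ ≤ _ := mul_le_mul_of_nonneg_left (hπbar s a) (by positivity)
  have hρ : ∀ s a, 0 ≤ ρ s a := fun s a => mul_nonneg (by positivity)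
    (sum_nonneg fun i _ => docc_nonneg hγ0.le hγ1 hd hP (hπt i) s a)
  have hρs : ∀ s, 0 ≤ ρs s := fun s => sum_nonneg fun a _ => hρ s a
  have hflow : ∀ s, ∑ a, ρ s a = (1 - γ) * d0 s + γ * ∑ s', ∑ a', ρ s' a' * Pstar s' a' s :=
    mixture_flow hγ0.le hγ1 hd hd1 hP hP1 hk hπt hπt1
  have hρ0 : ∀ s, (1 - γ) * d0 s ≤ ∑ a, ρ s a := fun s => by
    rw [hflow]
    exact le_add_of_nonneg_right (mul_nonneg hγ0.le (sum_nonneg fun s' _ => sum_nonneg fun a' _ =>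
      mul_nonneg (hρ s' a') (hP s' a' s)))
  have hρP : ∀ s, γ * ∑ s', ∑ a', ρ s' a' * Pstar s' a' s ≤ ∑ a, ρ s a := fun s => by
    rw [hflow]
    exact le_add_of_nonneg_left (mul_nonneg hD.le (hd s))
  have hζ0 : 0 ≤ ζ := le_trans (sum_nonneg fun s _ => mul_nonneg (hρs s)
    (sum_nonneg fun a _ => mul_nonneg (hπbar0 s a) (sq_nonneg _))) hζ
  have hα0 : 0 ≤ α := le_trans (by positivity) hα
  -- The model error `f` and the rescaled bonus `g` both take values in `[0, 2]`.
  have hf0 : ∀ s a, 0 ≤ f s a := fun s a => sum_nonneg fun s' _ => abs_nonneg _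
  have hf2 : ∀ s a, f s a ≤ 2 := fun s a => by
    calc f s a ≤ ∑ s', (Phat s a s' + Pstar s a s') := sum_le_sum fun s' _ => by
          rw [abs_le]; constructor <;> linarith [hP s a s', hQ s a s']
      _ = 2 := by rw [sum_add_distrib, hP1, hQ1]; norm_num
  have hg0 : ∀ s a, 0 ≤ g s a := fun s a => le_min (by positivity) (by norm_num)
  have hg2 : ∀ s a, g s a ≤ 2 := fun s a => min_le_right _ _
  have hb : ∀ s a, bhat s a = 1 / (1 - γ) * g s a := fun s a => rfl
  have hw : ∀ s a, 0 ≤ ρs s * πbar s a := fun s a => mul_nonneg (hρs s) (hπbar0 s a)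
  -- Second moment of the bonus under the data distribution, by the trace bound.
  have hgW : ∑ s, (∑ a, ρ s a) * ∑ a, πbar s a * g s a ^ 2 ≤ α ^ 2 * d / k := by
    have htr := cov_trace_le hk0.le hw φhat hl
    change (k : ℝ) * ∑ s, ∑ a, ρs s * πbar s a * (φhat s a ⬝ᵥ (Sighat⁻¹ *ᵥ φhat s a)) ≤ d at htr
    have hpd : Sighat⁻¹.PosDef := (cov_posDef hk0.le hw φhat hl).inv
    have h1 : ∑ s, (∑ a, ρ s a) * ∑ a, πbar s a * g s a ^ 2 ≤
        α ^ 2 * ∑ s, ∑ a, ρs s * πbar s a * (φhat s a ⬝ᵥ (Sighat⁻¹ *ᵥ φhat s a)) := by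
      rw [mul_sum]
      refine sum_le_sum fun s _ => ?_
      rw [mul_sum, mul_sum]
      refine sum_le_sum fun a _ => ?_
      have hq : 0 ≤ φhat s a ⬝ᵥ (Sighat⁻¹ *ᵥ φhat s a) := by
        simpa using hpd.posSemidef.dotProduct_mulVec_nonneg (φhat s a)
      have hsq : g s a ^ 2 ≤ α ^ 2 * (φhat s a ⬝ᵥ (Sighat⁻¹ *ᵥ φhat s a)) := by
        calc g s a ^ 2 ≤ (α * Real.sqrt (φhat s a ⬝ᵥ (Sighat⁻¹ *ᵥ φhat s a))) ^ 2 :=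
              pow_le_pow_left₀ (hg0 s a) (min_le_left _ _) 2
          _ = _ := by rw [mul_pow, Real.sq_sqrt hq]
      calc (∑ a, ρ s a) * (πbar s a * g s a ^ 2) = ρs s * πbar s a * g s a ^ 2 := by
            rw [← mul_assoc]
        _ ≤ ρs s * πbar s a * (α ^ 2 * (φhat s a ⬝ᵥ (Sighat⁻¹ *ᵥ φhat s a))) :=
            mul_le_mul_of_nonneg_left hsq (hw s a)
        _ = _ := by ring
    refine h1.trans ?_
    rw [le_div_iff₀ hk0, mul_assoc]
    refine mul_le_mul_of_nonneg_left ?_ (sq_nonneg α)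
    rwa [mul_comm]
  have hC0 : 0 ≤ (Fintype.card A : ℝ) / ξ := by positivity
  have hF := one_step_back hγ0 hγ1 hd hd1 hP hP1 hπ hπ1 hPφ hμ hρ hρ0 hρP hC0 hππ hk0.le hl
    hf0 hf2 hζ
  have hG := one_step_back hγ0 hγ1 hd hd1 hP hP1 hπ hπ1 hPφ hμ hρ hρ0 hρP hC0 hππ hk0.le hl
    hg0 hg2 hgW
  change _ ≤ _ + _ * ∑ s, ∑ a, docc γ d0 Pstar π s a *
    Real.sqrt (φstar s a ⬝ᵥ (Sigstar⁻¹ *ᵥ φstar s a)) at hF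
  change _ ≤ _ + _ * ∑ s, ∑ a, docc γ d0 Pstar π s a *
    Real.sqrt (φstar s a ⬝ᵥ (Sigstar⁻¹ *ᵥ φstar s a)) at hG
  -- The simulation identity, and the resulting bound of the bias by averages of `g` and `f`.
  have hℓ1 : ∀ s a, |ℓ s a| ≤ 1 := fun s a => by
    rw [abs_of_nonneg (hℓ s a).1]; exact (hℓ s a).2
  have hr : ∀ s a, |ℓ s a - bhat s a| ≤ 2 / (1 - γ) := fun s a => by
    have h1 : 0 ≤ bhat s a := mul_nonneg (by positivity) (hg0 s a)
    have h2 : bhat s a ≤ 2 / (1 - γ) := by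
      rw [hb, one_div_mul_eq_div]
      exact div_le_div_of_nonneg_right (hg2 s a) hD.le
    have h3 : 1 ≤ 2 / (1 - γ) := by rw [le_div_iff₀ hD]; linarith
    rw [abs_le]
    constructor <;> linarith [(hℓ s a).1, (hℓ s a).2]
  have hV := abs_value_le hγ0.le hγ1 hQ hQ1 hπ hπ1 hr
  have hs1 := simulation hγ0.le hγ1 hd hd1 hP hP1 hP hP1 hπ hπ1 hℓ1
  have hs2 := simulation hγ0.le hγ1 hd hd1 hP hP1 hQ hQ1 hπ hπ1 hr
  simp only [sub_self, zero_mul, sum_const_zero, mul_zero, add_zero] at hs1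
  have hdiff : (1 - γ) * (valueInit γ d0 Pstar ℓ π -
        valueInit γ d0 Phat (fun s a => ℓ s a - bhat s a) π) ≤
      1 / (1 - γ) * (∑ s, ∑ a, docc γ d0 Pstar π s a * g s a) +
      2 / (1 - γ) ^ 2 * (∑ s, ∑ a, docc γ d0 Pstar π s a * f s a) := by
    rw [mul_sub, hs1, hs2, mul_sum, mul_sum, ← sum_sub_distrib, ← sum_add_distrib]
    refine sum_le_sum fun s _ => ?_
    rw [mul_sum, mul_sum, ← sum_sub_distrib, ← sum_add_distrib]
    refine sum_le_sum fun a _ => ?_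
    have hDo := docc_nonneg hγ0.le hγ1 hd hP hπ s a
    set V := value γ Phat (fun s a => ℓ s a - bhat s a) π
    have h1 : |∑ s', (Phat s a s' - Pstar s a s') * V s'| ≤ f s a * (2 / (1 - γ) / (1 - γ)) := by
      refine (abs_sum_le_sum_abs _ _).trans ?_
      rw [sum_mul]
      refine sum_le_sum fun s' _ => ?_
      rw [abs_mul]
      exact mul_le_mul_of_nonneg_left (hV s') (abs_nonneg _)
    have h2 : -(γ * ∑ s', (Phat s a s' - Pstar s a s') * V s') ≤ 2 / (1 - γ) ^ 2 * f s a := by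
      have h3 : |γ * ∑ s', (Phat s a s' - Pstar s a s') * V s'| ≤
          1 * (f s a * (2 / (1 - γ) / (1 - γ))) := by
        rw [abs_mul, abs_of_nonneg hγ0.le]
        exact mul_le_mul hγ1.le h1 (abs_nonneg _) zero_le_one
      calc _ ≤ _ := (neg_le_abs _).trans h3
        _ = _ := by field_simp
    rw [hb]
    have h4 := mul_le_mul_of_nonneg_left h2 hDo
    linarith
  have hX : 0 ≤ ∑ s, ∑ a, docc γ d0 Pstar π s a *
      Real.sqrt (φstar s a ⬝ᵥ (Sigstar⁻¹ *ᵥ φstar s a)) :=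
    sum_nonneg fun s _ => sum_nonneg fun a _ =>
      mul_nonneg (docc_nonneg hγ0.le hγ1 hd hP hπ s a) (Real.sqrt_nonneg _)
  rw [one_mul] at hα
  exact bias_arith hD (by linarith) hk0 ha1 hd1' hξ0 hξ1 hl hζ0 hα hX hG hF hdiff
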